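/- arXiv:2604.17401 — 3 statements merged into one kernel-verified Lean document; each statement's English description precedes it below -/
import Mathlib

section
/- For every binary string w : List Bool, writing (p₁, q₁), (p₂, q₂), (p₃, q₃) for the numerator-denominator pairs of (MT w).1, (MT w).2 and mf(w) respectively, the following relations hold: p₂·q₃ − p₃·q₂ = q₁ and p₃·q₁ − p₁·q₃ = q₂. -/
/-!
Write `pᵢ/qᵢ` for the fractions and let `d = p₂q₁ - p₁q₂` at a node of the tree. Along the tree
`(q₁, q₂, d)` is a Markov triple, `q₁² + q₂² + d² = 3 q₁ q₂ d`, with `q₁, q₂` coprime, and `d`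
divides `p₁q₁ + p₂q₂` (`IsMarkovPair`). Hence `d` divides both the numerator and the denominator in
the definition of the mediant, and the quotients `P, Q` satisfy `p₂Q - Pq₂ = q₁` and
`Pq₁ - p₁Q = q₂`, by multiplying through by `d` and cancelling. These relations also show that a
common divisor of `P` and `Q` divides `q₁` and `q₂`, so `P/Q` is the mediant in lowest terms
(`IsMarkovPair.mediant_relations`).

For the two children the determinant `d` becomes `q₂`, respectively `q₁`, so the new triples
consist of `q₁, q₂` and the Vieta mutation `Q = 3 q₁ q₂ - d` of `d`. The divisibility condition for a child follows from
the Markov equation after multiplying by a denominator coprime to the new determinant.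
-/

/-- The Springborn mediant of two rationals. -/
def sm (x y : ℚ) : ℚ :=
  ((x.num * x.den + y.num * y.den : ℤ) : ℚ) / ((x.den ^ 2 + y.den ^ 2 : ℕ) : ℚ)

/-- The Markov fraction tree: `MT []  = (0, 1/2)`, and for `MT w = (x, y)`,
`MT (w ++ [false]) = (x, sm x y)` and `MT (w ++ [true]) = (sm x y, y)`. -/
def MT (w : List Bool) : ℚ × ℚ :=
  w.foldl (fun p b => if b then (sm p.1 p.2, p.2) else (p.1, sm p.1 p.2)) (0, 1/2)

/-- The Markov fraction at node `w`. -/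
def mf (w : List Bool) : ℚ := sm (MT w).1 (MT w).2

/-- The invariant of the pairs in the Markov fraction tree: the denominators and the determinant
`y.num * x.den - x.num * y.den` form a Markov triple, and the determinant divides the numerator
appearing in the Springborn mediant. The denominators are coprime. -/
structure IsMarkovPair (x y : ℚ) : Prop where
  pos : 0 < y.num * x.den - x.num * y.den
  markov : (x.den : ℤ) ^ 2 + (y.den : ℤ) ^ 2 + (y.num * x.den - x.num * y.den) ^ 2 =
    3 * x.den * y.den * (y.num * x.den - x.num * y.den)
  dvd : y.num * x.den - x.num * y.den ∣ x.num * x.den + y.num * y.den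
  coprime : IsCoprime (x.den : ℤ) (y.den : ℤ)

/-- Numerator and denominator of the mediant of a Markov pair: the determinant relations, together
with the Vieta form `Q = 3 q₁ q₂ - d` of the denominator. -/
theorem IsMarkovPair.mediant_relations {x y : ℚ} (h : IsMarkovPair x y) :
    y.num * (sm x y).den - (sm x y).num * y.den = x.den ∧
    (sm x y).num * x.den - x.num * (sm x y).den = y.den ∧
    ((sm x y).den : ℤ) = 3 * x.den * y.den - (y.num * x.den - x.num * y.den) := by
  obtain ⟨hd, hm, ⟨P, hP⟩, hc⟩ := h
  have hsm : sm x y = ((x.num * x.den + y.num * y.den : ℤ) : ℚ) /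
      (((x.den : ℤ) ^ 2 + (y.den : ℤ) ^ 2 : ℤ) : ℚ) := by
    unfold sm; push_cast; rfl
  have hx : (0 : ℤ) < x.den := by exact_mod_cast x.den_pos
  have hy : (0 : ℤ) < y.den := by exact_mod_cast y.den_pos
  generalize hp₁ : x.num = p₁ at *
  generalize hp₂ : y.num = p₂ at *
  generalize hq₁ : (x.den : ℤ) = q₁ at *
  generalize hq₂ : (y.den : ℤ) = q₂ at *
  obtain ⟨d, hdd⟩ : ∃ d, d = p₂ * q₁ - p₁ * q₂ := ⟨_, rfl⟩
  rw [← hdd] at hd hm hP ⊢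
  obtain ⟨Q, hQ⟩ : ∃ Q, Q = 3 * q₁ * q₂ - d := ⟨_, rfl⟩
  have hdQ : q₁ ^ 2 + q₂ ^ 2 = d * Q := by rw [hQ]; linear_combination hm
  have hQpos : 0 < Q := by
    have : 0 < d * Q := by rw [← hdQ]; positivity
    exact pos_of_mul_pos_right this hd.le
  have r₁ : p₂ * Q - P * q₂ = q₁ := by
    apply mul_left_cancel₀ hd.ne'
    linear_combination q₂ * hP - p₂ * hdQ - q₁ * hdd
  have r₂ : P * q₁ - p₁ * Q = q₂ := by
    apply mul_left_cancel₀ hd.ne'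
    linear_combination -q₁ * hP + p₁ * hdQ - q₂ * hdd
  have hPQ : IsCoprime P Q := by
    obtain ⟨a, b, hab⟩ := hc
    exact ⟨b * q₁ - a * q₂, a * p₂ - b * p₁, by linear_combination a * r₁ + b * r₂ + hab⟩
  have hsm' : sm x y = (P : ℚ) / (Q : ℚ) := by
    rw [hsm, hP, hdQ]
    push_cast
    rw [mul_div_mul_left]
    exact_mod_cast hd.ne'
  have hnat : Nat.Coprime P.natAbs Q.natAbs := Int.isCoprime_iff_gcd_eq_one.mp hPQ
  have hnum : (sm x y).num = P := by
    rw [hsm']; exact Rat.num_div_eq_of_coprime hQpos hnat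
  have hden : ((sm x y).den : ℤ) = Q := by
    rw [hsm']; exact Rat.den_div_eq_of_coprime hQpos hnat
  rw [hnum, hden]
  exact ⟨r₁, r₂, hQ⟩

theorem IsMarkovPair.left {x y : ℚ} (h : IsMarkovPair x y) : IsMarkovPair x (sm x y) := by
  obtain ⟨r₁, r₂, hQ⟩ := h.mediant_relations
  obtain ⟨hd, hm, -, hc⟩ := h
  have hmk : (x.den : ℤ) ^ 2 + ((sm x y).den : ℤ) ^ 2 + (y.den : ℤ) ^ 2 =
      3 * x.den * (sm x y).den * y.den := by
    rw [hQ]; linear_combination hm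
  refine ⟨?_, ?_, ?_, ?_⟩
  · rw [r₂]; exact_mod_cast y.den_pos
  · rw [r₂]; exact hmk
  · rw [r₂]
    -- modulo `q₂`, `q₁ (p₁q₁ + PQ) ≡ p₁ (q₁² + Q²) ≡ 0`
    refine hc.symm.dvd_of_dvd_mul_left ?_
    exact ⟨x.num * (3 * x.den * (sm x y).den - y.den) + (sm x y).den, by
      linear_combination x.num * hmk + ((sm x y).den : ℤ) * r₂⟩
  · obtain ⟨a, b, hab⟩ := hc
    exact ⟨a + b * (sm x y).num, -b * x.num, by linear_combination hab + b * r₂⟩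

theorem IsMarkovPair.right {x y : ℚ} (h : IsMarkovPair x y) : IsMarkovPair (sm x y) y := by
  obtain ⟨r₁, r₂, hQ⟩ := h.mediant_relations
  obtain ⟨hd, hm, -, hc⟩ := h
  have hmk : ((sm x y).den : ℤ) ^ 2 + (y.den : ℤ) ^ 2 + (x.den : ℤ) ^ 2 =
      3 * (sm x y).den * y.den * x.den := by
    rw [hQ]; linear_combination hm
  refine ⟨?_, ?_, ?_, ?_⟩
  · rw [r₁]; exact_mod_cast x.den_pos
  · rw [r₁]; exact hmk
  · rw [r₁]
    -- modulo `q₁`, `q₂ (PQ + p₂q₂) ≡ p₂ (Q² + q₂²) ≡ 0`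
    refine hc.dvd_of_dvd_mul_left ?_
    exact ⟨y.num * (3 * (sm x y).den * y.den - x.den) - (sm x y).den, by
      linear_combination y.num * hmk - ((sm x y).den : ℤ) * r₁⟩
  · obtain ⟨a, b, hab⟩ := hc
    exact ⟨a * y.num, b - a * (sm x y).num, by linear_combination hab + a * r₁⟩

theorem isMarkovPair_MT (w : List Bool) : IsMarkovPair (MT w).1 (MT w).2 := by
  induction w using List.reverseRecOn with
  | nil =>
    have hn : (1 / 2 : ℚ).num = 1 := by norm_num
    have hd : (1 / 2 : ℚ).den = 2 := by norm_num
    simp only [MT, List.foldl_nil]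
    constructor <;> simp only [hn, hd, Rat.num_zero, Rat.den_zero] <;> norm_num
  | append_singleton w b ih =>
    have hstep : MT (w ++ [b]) = if b then (sm (MT w).1 (MT w).2, (MT w).2)
        else ((MT w).1, sm (MT w).1 (MT w).2) := by
      simp [MT, List.foldl_append]
    rw [hstep]
    cases b
    · exact ih.left
    · exact ih.right

/-- Relations (7): `p₂q₃ − p₃q₂ = q₁` and `p₃q₁ − p₁q₃ = q₂` for the three Markov
fractions around a node of the tree. -/
theorem markov_fraction_relations (w : List Bool) :
    ((MT w).2).num * ((mf w).den : ℤ) - (mf w).num * (((MT w).2).den : ℤ) =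
      (((MT w).1).den : ℤ) ∧
    (mf w).num * (((MT w).1).den : ℤ) - ((MT w).1).num * ((mf w).den : ℤ) =
      (((MT w).2).den : ℤ) := by
  obtain ⟨r₁, r₂, -⟩ := (isMarkovPair_MT w).mediant_relations
  exact ⟨r₁, r₂⟩
end

section
/- For every binary string w : List Bool, the denominator of the Markov fraction at node w divides the square of its numerator plus one: (mf w).den ∣ (mf w).num² + 1. -/
/-- The invariant of neighbouring fractions `x < y` in the Markov fraction tree: Markov's equation
for the denominators and the determinant of `x` and `y`, in terms of the cofactors
`a = (x.num ^ 2 + 1) / x.den` and `b = (y.num ^ 2 + 1) / y.den`. -/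
def MarkovPair (x y : ℚ) : Prop :=
  ∃ a b : ℤ, x.num ^ 2 + 1 = x.den * a ∧ y.num ^ 2 + 1 = y.den * b ∧
    a * y.den + x.den * b - 2 * x.num * y.num = 3 * (y.num * x.den - x.num * y.den) ∧
    0 < y.num * x.den - x.num * y.den

/-- The first row `k, n` of the product of two Cohn matrices, together with the cofactor `c` of the
resulting fraction, and the invariants of the two new pairs. -/
lemma cohn_product {p q a r s b : ℤ} (ha : p ^ 2 + 1 = q * a) (hb : r ^ 2 + 1 = s * b)
    (h : a * s + q * b - 2 * p * r = 3 * (r * q - p * s)) :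
    ∃ k n c : ℤ, n * (r * q - p * s) = q ^ 2 + s ^ 2 ∧
      k * (r * q - p * s) = p * q + r * s ∧ k ^ 2 + 1 = n * c ∧
      k * q - p * n = s ∧ r * n - k * s = q ∧
      a * n + q * c - 2 * p * k = 3 * s ∧ c * s + n * b - 2 * k * r = 3 * q := by
  -- `c` is `3 * k` minus the lower left entry of the product.
  refine ⟨3 * p * s + s * a - p * r, 3 * q * s - (r * q - p * s),
    3 * (3 * p * s + s * a - p * r) - ((3 * p - a) * r + (3 * q - p) * (3 * r - b)),
    ?_, ?_, ?_, ?_, ?_, ?_, ?_⟩ <;> grind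

lemma num_den_of_dvd {k n c : ℤ} (hn : 0 < n) (h : k ^ 2 + 1 = n * c) :
    ((k : ℚ) / n).num = k ∧ (((k : ℚ) / n).den : ℤ) = n := by
  have hc : IsCoprime k n := ⟨-k, c, by linarith⟩
  have hc' : Nat.Coprime k.natAbs n.natAbs := Int.isCoprime_iff_gcd_eq_one.mp hc
  exact ⟨Rat.num_div_eq_of_coprime hn hc', Rat.den_div_eq_of_coprime hn hc'⟩

lemma MarkovPair.sm {x y : ℚ} (h : MarkovPair x y) :
    MarkovPair x (sm x y) ∧ MarkovPair (sm x y) y := by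
  obtain ⟨a, b, ha, hb, hab, hd⟩ := h
  obtain ⟨k, n, c, hn, hk, hc, h1, h2, h3, h4⟩ := cohn_product ha hb hab
  have hq : (0 : ℤ) < x.den := by exact_mod_cast x.den_pos
  have hs : (0 : ℤ) < y.den := by exact_mod_cast y.den_pos
  have hn0 : 0 < n := pos_of_mul_pos_left (by rw [hn]; positivity) hd.le
  have hm : _root_.sm x y = (k : ℚ) / n := by
    have hd' : ((y.num * x.den - x.num * y.den : ℤ) : ℚ) ≠ 0 := by exact_mod_cast hd.ne'
    have e : ((x.den ^ 2 + y.den ^ 2 : ℕ) : ℚ) = ((x.den ^ 2 + y.den ^ 2 : ℤ) : ℚ) := by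
      push_cast; rfl
    rw [_root_.sm, e, ← hn, ← hk, Int.cast_mul, Int.cast_mul, mul_div_mul_right _ _ hd']
  obtain ⟨hnum, hden⟩ := num_den_of_dvd hn0 hc
  rw [← hm] at hnum hden
  refine ⟨⟨a, c, ha, ?_, ?_, ?_⟩, ⟨c, b, ?_, hb, ?_, ?_⟩⟩ <;> rw [hnum, hden] <;> linarith

lemma markovPair_MT (w : List Bool) : MarkovPair (MT w).1 (MT w).2 := by
  induction w using List.reverseRecOn with
  | nil =>
    exact ⟨1, 1, by norm_num [MT], by norm_num [MT], by norm_num [MT], by norm_num [MT]⟩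
  | append_singleton w b ih =>
    cases b
    · simpa [MT] using ih.sm.1
    · simpa [MT] using ih.sm.2

/-- The denominator of every Markov fraction divides the square of its numerator
plus one. -/
theorem markov_denominator_dvd_num_sq_add_one (w : List Bool) :
    ((mf w).den : ℤ) ∣ (mf w).num ^ 2 + 1 := by
  obtain ⟨_, c, _, hc, _⟩ := (markovPair_MT w).sm.1
  exact ⟨c, hc⟩
end

section
/- The map w ↦ mf(w) from List Bool to ℚ is injective (all Markov fractions occurring in the tree are distinct), and consequently, for every integer a, the map w ↦ cm_a(w) from List Bool to M₂(ℤ) is injective (all Cohn matrices in the Cohn tree with parameter a are distinct). -/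
/-- Aigner's initial Cohn matrix `A(a)`. -/
def Amat (a : ℤ) : Matrix (Fin 2) (Fin 2) ℤ :=
  !![a, 1; 3*a - a^2 - 1, 3 - a]

/-- Aigner's initial Cohn matrix `B(a)`. -/
def Bmat (a : ℤ) : Matrix (Fin 2) (Fin 2) ℤ :=
  !![2*a + 1, 2; -2*a^2 + 4*a + 2, 5 - 2*a]

/-- The Cohn tree with parameter `a`: `CT a [] = (A a, B a)`, and for `CT a w = (L, R)`,
`CT a (w ++ [false]) = (L, L*R)` and `CT a (w ++ [true]) = (L*R, R)`. -/
def CT (a : ℤ) (w : List Bool) : Matrix (Fin 2) (Fin 2) ℤ × Matrix (Fin 2) (Fin 2) ℤ :=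
  w.foldl (fun p b => if b then (p.1 * p.2, p.2) else (p.1, p.1 * p.2)) (Amat a, Bmat a)

/-- The Cohn matrix at node `w`. -/
def cm (a : ℤ) (w : List Bool) : Matrix (Fin 2) (Fin 2) ℤ :=
  (CT a w).1 * (CT a w).2

/-- Invariant form of the binary search tree principle. The state `s` is the interval
`(lo s, hi s)` together with the key `key s` inside it, and a step replaces the interval by its part
to the left (`false`) or right (`true`) of the key. -/
theorem bst_injective {S : Type} (step : S → Bool → S) (I : S → Prop) (lo hi key : S → ℚ)
    (hI : ∀ s b, I s → I (step s b))
    (hlo : ∀ s, I s → lo s < key s) (hhi : ∀ s, I s → key s < hi s)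
    (lf : ∀ s, lo (step s false) = lo s) (hf : ∀ s, hi (step s false) = key s)
    (lt : ∀ s, lo (step s true) = key s) (ht : ∀ s, hi (step s true) = hi s)
    (s : S) (hs : I s) : Function.Injective fun w : List Bool => key (w.foldl step s) := by
  have bd : ∀ (w : List Bool) (s : S), I s →
      lo s < key (w.foldl step s) ∧ key (w.foldl step s) < hi s := by
    intro w
    induction w with
    | nil => exact fun s h => ⟨hlo s h, hhi s h⟩
    | cons b w ih =>
      intro s h
      have h1 := ih _ (hI s b h)
      have h2 := hlo s h
      have h3 := hhi s h
      rw [List.foldl_cons]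
      cases b
      · rw [lf, hf] at h1
        exact ⟨h1.1, h1.2.trans h3⟩
      · rw [lt, ht] at h1
        exact ⟨h2.trans h1.1, h1.2⟩
  have bf : ∀ (w : List Bool) (s : S), I s → key (w.foldl step (step s false)) < key s := by
    intro w s h
    have := (bd w _ (hI s false h)).2
    rwa [hf] at this
  have bt : ∀ (w : List Bool) (s : S), I s → key s < key (w.foldl step (step s true)) := by
    intro w s h
    have := (bd w _ (hI s true h)).1
    rwa [lt] at this
  intro w
  induction w generalizing s with
  | nil =>
    rintro (_ | ⟨_ | _, v⟩) h
    · rfl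
    · exact absurd h (bf v s hs).ne'
    · exact absurd h (bt v s hs).ne
  | cons b w ih =>
    rintro (_ | ⟨c, v⟩) h
    · cases b
      · exact absurd h (bf w s hs).ne
      · exact absurd h (bt w s hs).ne'
    · cases b <;> cases c
      · rw [ih _ (hI s false hs) h]
      · exact absurd h ((bf w s hs).trans (bt v s hs)).ne
      · exact absurd h ((bf v s hs).trans (bt w s hs)).ne'
      · rw [ih _ (hI s true hs) h]

theorem sm_eq (x y : ℚ) :
    sm x y = (x * (x.den : ℚ) ^ 2 + y * (y.den : ℚ) ^ 2) / ((x.den : ℚ) ^ 2 + (y.den : ℚ) ^ 2) := by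
  have hx := Rat.mul_den_eq_num x
  have hy := Rat.mul_den_eq_num y
  unfold sm
  push_cast
  rw [← hx, ← hy]
  ring

theorem lt_sm {x y : ℚ} (h : x < y) : x < sm x y := by
  have hx : (0 : ℚ) < (x.den : ℚ) ^ 2 := by have := x.den_pos; positivity
  have hy : (0 : ℚ) < (y.den : ℚ) ^ 2 := by have := y.den_pos; positivity
  rw [sm_eq, lt_div_iff₀ (by positivity)]
  nlinarith

theorem sm_lt {x y : ℚ} (h : x < y) : sm x y < y := by
  have hx : (0 : ℚ) < (x.den : ℚ) ^ 2 := by have := x.den_pos; positivity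
  have hy : (0 : ℚ) < (y.den : ℚ) ^ 2 := by have := y.den_pos; positivity
  rw [sm_eq, div_lt_iff₀ (by positivity)]
  nlinarith

theorem mf_injective : Function.Injective mf :=
  bst_injective (S := ℚ × ℚ)
    (fun p b => if b then (sm p.1 p.2, p.2) else (p.1, sm p.1 p.2))
    (fun p => p.1 < p.2) Prod.fst Prod.snd (fun p => sm p.1 p.2)
    (by
      rintro s (_ | _) h
      · exact lt_sm h
      · exact sm_lt h)
    (fun _ h => lt_sm h) (fun _ h => sm_lt h)
    (fun _ => rfl) (fun _ => rfl) (fun _ => rfl) (fun _ => rfl) (0, 1/2) (by norm_num)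

/-- A pair of Cohn matrices `(L, R)` adjacent in the tree. The last field is Markov's equation for
the upper right entries of `L`, `R` and `L⁻¹ * R`, the last of these being
`L 0 1 * R 0 0 - L 0 0 * R 0 1`; the second factor on its left is `(L * R) 0 1`. -/
structure CohnPair (L R : Matrix (Fin 2) (Fin 2) ℤ) : Prop where
  posL : 0 < L 0 1
  posR : 0 < R 0 1
  posD : 0 < L 0 1 * R 0 0 - L 0 0 * R 0 1
  detL : L 0 0 * L 1 1 - L 0 1 * L 1 0 = 1
  detR : R 0 0 * R 1 1 - R 0 1 * R 1 0 = 1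
  trL : L 0 0 + L 1 1 = 3 * L 0 1
  trR : R 0 0 + R 1 1 = 3 * R 0 1
  markov : (L 0 1 * R 0 0 - L 0 0 * R 0 1) * (L 0 0 * R 0 1 + L 0 1 * R 1 1)
    = L 0 1 ^ 2 + R 0 1 ^ 2

namespace CohnPair

variable {L R : Matrix (Fin 2) (Fin 2) ℤ}

theorem posP (h : CohnPair L R) : 0 < (L * R) 0 1 := by
  have h1 := h.markov
  have h2 := h.posD
  have h3 := h.posL
  rw [Matrix.mul_apply, Fin.sum_univ_two]
  exact pos_of_mul_pos_right (b := L 0 0 * R 0 1 + L 0 1 * R 1 1)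
    (by rw [h1]; positivity) h2.le

theorem detP (h : CohnPair L R) :
    (L * R) 0 0 * (L * R) 1 1 - (L * R) 0 1 * (L * R) 1 0 = 1 := by
  simp only [Matrix.mul_apply, Fin.sum_univ_two]
  linear_combination (R 0 0 * R 1 1 - R 0 1 * R 1 0) * h.detL + h.detR

theorem trP (h : CohnPair L R) : (L * R) 0 0 + (L * R) 1 1 = 3 * (L * R) 0 1 := by
  simp only [Matrix.mul_apply, Fin.sum_univ_two]
  -- The lower left entries are only controlled by the determinants, through `L 0 1 * L 1 0` and
  -- `R 0 1 * R 1 0`.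
  apply mul_left_cancel₀ (mul_pos h.posL h.posR).ne'
  linear_combination -L 0 1 ^ 2 * h.detR - R 0 1 ^ 2 * h.detL + h.markov
    + (L 0 0 * R 0 1 + L 0 1 * R 1 1) * R 0 1 * h.trL

/-- The number `D` of the left successor pair `(L, L * R)`. -/
theorem crossL (h : CohnPair L R) : L 0 1 * (L * R) 0 0 - L 0 0 * (L * R) 0 1 = R 0 1 := by
  simp only [Matrix.mul_apply, Fin.sum_univ_two]
  apply mul_left_cancel₀ h.posR.ne'
  linear_combination h.markov - L 0 1 ^ 2 * h.detR

/-- The number `D` of the right successor pair `(L * R, R)`. -/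
theorem crossR (h : CohnPair L R) : (L * R) 0 1 * R 0 0 - (L * R) 0 0 * R 0 1 = L 0 1 := by
  simp only [Matrix.mul_apply, Fin.sum_univ_two]
  linear_combination L 0 1 * h.detR

/-- Markov's equation for the upper right entries of `L`, `R` and `L * R`. -/
theorem markovP (h : CohnPair L R) :
    L 0 1 ^ 2 + R 0 1 ^ 2 + (L * R) 0 1 ^ 2 = 3 * L 0 1 * R 0 1 * (L * R) 0 1 := by
  simp only [Matrix.mul_apply, Fin.sum_univ_two]
  linear_combination -h.markov + L 0 1 * (L 0 0 * R 0 1 + L 0 1 * R 1 1) * h.trR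

theorem left (h : CohnPair L R) : CohnPair L (L * R) where
  posL := h.posL
  posR := h.posP
  posD := by rw [h.crossL]; exact h.posR
  detL := h.detL
  detR := h.detP
  trL := h.trL
  trR := h.trP
  markov := by
    rw [h.crossL]
    linear_combination R 0 1 * L 0 1 * h.trP - R 0 1 * h.crossL - h.markovP

theorem right (h : CohnPair L R) : CohnPair (L * R) R where
  posL := h.posP
  posR := h.posR
  posD := by rw [h.crossR]; exact h.posL
  detL := h.detP
  detR := h.detR
  trL := h.trP
  trR := h.trR
  markov := by
    rw [h.crossR]
    linear_combination L 0 1 * (L * R) 0 1 * h.trR - L 0 1 * h.crossR - h.markovP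

/-- Positivity of `D` says that the keys of a pair are in increasing order. -/
theorem key_lt (h : CohnPair L R) : (L 0 0 : ℚ) / L 0 1 < (R 0 0 : ℚ) / R 0 1 := by
  rw [div_lt_div_iff₀ (by exact_mod_cast h.posL) (by exact_mod_cast h.posR)]
  have := h.posD
  norm_cast
  linarith

end CohnPair

theorem cohnPair_init (a : ℤ) : CohnPair (Amat a) (Bmat a) := by
  constructor <;> simp [Amat, Bmat] <;> ring_nf <;> norm_num

theorem cm_injective (a : ℤ) : Function.Injective (cm a) := by
  have key := bst_injective (S := Matrix (Fin 2) (Fin 2) ℤ × Matrix (Fin 2) (Fin 2) ℤ)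
    (fun p b => if b then (p.1 * p.2, p.2) else (p.1, p.1 * p.2))
    (fun p => CohnPair p.1 p.2)
    (fun p => (p.1 0 0 : ℚ) / p.1 0 1) (fun p => (p.2 0 0 : ℚ) / p.2 0 1)
    (fun p => ((p.1 * p.2) 0 0 : ℚ) / (p.1 * p.2) 0 1)
    (by
      rintro s (_ | _) h
      · exact h.left
      · exact h.right)
    (fun _ h => h.left.key_lt) (fun _ h => h.right.key_lt)
    (fun _ => rfl) (fun _ => rfl) (fun _ => rfl) (fun _ => rfl) (Amat a, Bmat a) (cohnPair_init a)
  intro v w h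
  exact key (congrArg (fun M : Matrix (Fin 2) (Fin 2) ℤ => (M 0 0 : ℚ) / M 0 1) h)

/-- All Markov fractions in the tree are distinct, and consequently, for every
integer `a`, all Cohn matrices in the Cohn tree with parameter `a` are distinct. -/
theorem markov_fractions_and_cohn_matrices_distinct :
    Function.Injective mf ∧ ∀ a : ℤ, Function.Injective (cm a) :=
  ⟨mf_injective, cm_injective⟩
end
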